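/- Let K ≥ 2, let (𝒳, μ) be a measure space, let σ_1, …, σ_K : 𝒳 → (0,∞) be measurable, and let q : 𝒳 → [0,∞) be a measurable probability density with respect to μ with Σ_a σ_a · q μ-integrable. Then for every measurable w : 𝒳 → interior of the K-simplex and every measurable probability density p : 𝒳 → [0,∞) with p > 0 μ-a.e. on {q > 0}, it holds that ∫ (Σ_{a=1}^K σ_a(x)²/w_a(x)) · q(x)²/p(x) dμ(x) ≥ (∫ (Σ_{a=1}^K σ_a(x)) q(x) dμ(x))², and the bound is attained by w_a*(x) = σ_a(x)/Σ_b σ_b(x) and p*(x) = (Σ_a σ_a(x)) q(x) / ∫ (Σ_a σ_a) q dμ (assuming the normalizing integral is positive and finite). -/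

import Mathlib

open MeasureTheory Finset

/-!
The bound is Sedrakyan's form of the Cauchy–Schwarz inequality, `(∑ f)² / ∑ g ≤ ∑ f² / g`, used
twice: over the treatments with `g = w x` it replaces `∑ₐ σₐ² / wₐ` by `S²`, where `S = ∑ₐ σₐ`, and
over the covariates with `f = S q` and `g = p` it bounds `∫ (S q)² / p` below by `(∫ S q)²`.
Both steps are equalities when `f` and `g` are proportional, that is for `w ∝ σ` and `p ∝ S q`.
-/

section Algebra

variable {ι R : Type*}

theorem sq_div_self_div [CommGroupWithZero R] (x y : R) : x ^ 2 / (x / y) = x * y := by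
  rw [div_div_eq_mul_div, mul_div_right_comm, sq, mul_self_div_self]

theorem sum_sq_div_div_sum [Semifield R] (s : Finset ι) (f : ι → R) :
    ∑ i ∈ s, f i ^ 2 / (f i / ∑ j ∈ s, f j) = (∑ i ∈ s, f i) ^ 2 := by
  simp_rw [sq_div_self_div, ← sum_mul, ← sq]

variable [Field R] [LinearOrder R] [IsStrictOrderedRing R]

theorem sq_sum_le_sum_sq_div_of_sum_eq_one {s : Finset ι} (f : ι → R) {w : ι → R}
    (hw : ∀ i ∈ s, 0 < w i) (hw_sum : ∑ i ∈ s, w i = 1) :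
    (∑ i ∈ s, f i) ^ 2 ≤ ∑ i ∈ s, f i ^ 2 / w i := by
  simpa only [hw_sum, div_one] using sq_sum_div_le_sum_sq_div s f hw

-- The left-hand side is the tangent to `(x, y) ↦ x ^ 2 / y` along the ray `x = c * y`.
theorem two_mul_mul_sub_sq_mul_le_sq_div {x y : R} (hy : 0 ≤ y) (hxy : y = 0 → x = 0) (c : R) :
    2 * c * x - c ^ 2 * y ≤ x ^ 2 / y := by
  obtain rfl | hy_pos := hy.eq_or_lt
  · simp [hxy rfl]
  · rw [le_div_iff₀ hy_pos]
    linear_combination sq_nonneg (x - c * y)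

end Algebra

section Integral

variable {𝒳 : Type*} [MeasurableSpace 𝒳] {μ : Measure 𝒳}

theorem ofReal_integral_le_lintegral_ofReal (f : 𝒳 → ℝ) :
    ENNReal.ofReal (∫ x, f x ∂μ) ≤ ∫⁻ x, ENNReal.ofReal (f x) ∂μ := by
  by_cases hf : Integrable f μ
  · calc
      ENNReal.ofReal (∫ x, f x ∂μ) ≤ ENNReal.ofReal (∫ x, max (f x) 0 ∂μ) :=
        ENNReal.ofReal_le_ofReal (integral_mono hf hf.pos_part fun _ => le_max_left _ _)
      _ = ∫⁻ x, ENNReal.ofReal (max (f x) 0) ∂μ :=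
        ofReal_integral_eq_lintegral_ofReal hf.pos_part (ae_of_all _ fun _ => le_max_right _ _)
      _ = ∫⁻ x, ENNReal.ofReal (f x) ∂μ := by simp
  · simp [integral_undef hf]

theorem ofReal_sq_integral_div_integral_le_lintegral_sq_div {f p : 𝒳 → ℝ} (hf : Integrable f μ)
    (hp : Integrable p μ) (hp_nonneg : 0 ≤ᵐ[μ] p) (hfp : ∀ᵐ x ∂μ, p x = 0 → f x = 0) :
    ENNReal.ofReal ((∫ x, f x ∂μ) ^ 2 / ∫ x, p x ∂μ) ≤
      ∫⁻ x, ENNReal.ofReal (f x ^ 2 / p x) ∂μ := by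
  set c := (∫ x, f x ∂μ) / ∫ x, p x ∂μ with hc
  have integral_tangent :
      ∫ x, (2 * c * f x - c ^ 2 * p x) ∂μ = (∫ x, f x ∂μ) ^ 2 / ∫ x, p x ∂μ := by
    rw [integral_sub (hf.const_mul _) (hp.const_mul _), integral_const_mul, integral_const_mul]
    obtain hp_zero | hp_ne_zero := eq_or_ne (∫ x, p x ∂μ) 0
    · simp [hc, hp_zero]
    · rw [hc]
      field
  rw [← integral_tangent]
  refine (ofReal_integral_le_lintegral_ofReal _).trans (lintegral_mono_ae ?_)
  filter_upwards [hp_nonneg, hfp] with x hpx hfpx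
  exact ENNReal.ofReal_le_ofReal (two_mul_mul_sub_sq_mul_le_sq_div hpx hfpx c)

end Integral

section Design

variable {ι 𝒳 : Type*} [Fintype ι] [MeasurableSpace 𝒳] {μ : Measure 𝒳}
  {σ : ι → 𝒳 → ℝ} {q p : 𝒳 → ℝ} {w : 𝒳 → ι → ℝ}

/-- An experimental design for the target density `q`: treatment `a` is assigned at the covariate
`x` with probability `w x a`, and covariates are sampled from the `μ`-density `p`, which charges
almost all of `{q > 0}`. Measurability of `w` is not part of the notion. -/
structure IsDesign (μ : Measure 𝒳) (q : 𝒳 → ℝ) (w : 𝒳 → ι → ℝ) (p : 𝒳 → ℝ) : Prop where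
  assignment_pos : ∀ x a, 0 < w x a
  assignment_sum : ∀ x, ∑ a, w x a = 1
  density_nonneg : ∀ x, 0 ≤ p x
  density_integrable : Integrable p μ
  density_integral : ∫ x, p x ∂μ = 1
  density_pos : ∀ᵐ x ∂μ, 0 < q x → 0 < p x

/-- The `μ`-density of the efficiency bound `τ(w, p)`. Integrating against `μ` instead of the
target distribution `q μ` turns the factor `q / p` into `q ^ 2 / p`. -/
noncomputable def efficiencyIntegrand (σ : ι → 𝒳 → ℝ) (q : 𝒳 → ℝ) (w : 𝒳 → ι → ℝ) (p : 𝒳 → ℝ)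
    (x : 𝒳) : ℝ :=
  (∑ a, σ a x ^ 2 / w x a) * (q x ^ 2 / p x)

/-- The Neyman allocation: treatments are assigned proportionally to their conditional standard
deviations. -/
noncomputable def neymanAllocation (σ : ι → 𝒳 → ℝ) (x : 𝒳) (a : ι) : ℝ :=
  σ a x / ∑ b, σ b x

/-- The optimal covariate sampling density: the target density `q` reweighted by the total
conditional standard deviation and normalized. It is `0` if the normalizing integral vanishes. -/
noncomputable def optimalDensity (μ : Measure 𝒳) (σ : ι → 𝒳 → ℝ) (q : 𝒳 → ℝ) (x : 𝒳) : ℝ :=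
  (∑ a, σ a x) * q x / ∫ y, (∑ a, σ a y) * q y ∂μ

theorem IsDesign.sq_div_le_efficiencyIntegrand (hwp : IsDesign μ q w p) (σ : ι → 𝒳 → ℝ) (x : 𝒳) :
    ((∑ a, σ a x) * q x) ^ 2 / p x ≤ efficiencyIntegrand σ q w p x := by
  rw [mul_pow, mul_div_assoc, efficiencyIntegrand]
  have := hwp.density_nonneg x
  gcongr
  exact sq_sum_le_sum_sq_div_of_sum_eq_one _ (fun a _ => hwp.assignment_pos x a)
    (hwp.assignment_sum x)

theorem IsDesign.ofReal_sq_integral_le_lintegral_efficiencyIntegrand (hwp : IsDesign μ q w p)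
    (hq_nonneg : ∀ x, 0 ≤ q x) (hσq : Integrable (fun x => (∑ a, σ a x) * q x) μ) :
    ENNReal.ofReal ((∫ x, (∑ a, σ a x) * q x ∂μ) ^ 2) ≤
      ∫⁻ x, ENNReal.ofReal (efficiencyIntegrand σ q w p x) ∂μ := by
  have vanishing : ∀ᵐ x ∂μ, p x = 0 → (∑ a, σ a x) * q x = 0 := by
    filter_upwards [hwp.density_pos] with x hx hpx
    have hqx : q x = 0 := (hq_nonneg x).antisymm' (not_lt.mp fun h => (hx h).ne' hpx)
    rw [hqx, mul_zero]
  calc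
    ENNReal.ofReal ((∫ x, (∑ a, σ a x) * q x ∂μ) ^ 2)
      ≤ ∫⁻ x, ENNReal.ofReal (((∑ a, σ a x) * q x) ^ 2 / p x) ∂μ := by
        simpa only [hwp.density_integral, div_one] using
          ofReal_sq_integral_div_integral_le_lintegral_sq_div hσq hwp.density_integrable
            (ae_of_all _ hwp.density_nonneg) vanishing
    _ ≤ ∫⁻ x, ENNReal.ofReal (efficiencyIntegrand σ q w p x) ∂μ :=
        lintegral_mono fun x => ENNReal.ofReal_le_ofReal (hwp.sq_div_le_efficiencyIntegrand σ x)

theorem isDesign_neymanAllocation_optimalDensity (hσ : ∀ a x, 0 < σ a x)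
    (hq_nonneg : ∀ x, 0 ≤ q x) (hσq : Integrable (fun x => (∑ a, σ a x) * q x) μ)
    (hσq_pos : 0 < ∫ x, (∑ a, σ a x) * q x ∂μ) :
    IsDesign μ q (neymanAllocation σ) (optimalDensity μ σ q) := by
  have treatments_nonempty : Nonempty ι := by
    by_contra h
    simp [not_nonempty_iff.mp h] at hσq_pos
  have total_pos (x : 𝒳) : 0 < ∑ a, σ a x := sum_pos (fun a _ => hσ a x) univ_nonempty
  exact
    { assignment_pos := fun x a => div_pos (hσ a x) (total_pos x)
      assignment_sum := fun x => by
        simp only [neymanAllocation, ← sum_div, div_self (total_pos x).ne']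
      density_nonneg := fun x =>
        div_nonneg (mul_nonneg (total_pos x).le (hq_nonneg x)) hσq_pos.le
      density_integrable := hσq.div_const _
      density_integral := by
        simp only [optimalDensity, integral_div, div_self hσq_pos.ne']
      density_pos := ae_of_all _ fun x hqx => div_pos (mul_pos (total_pos x) hqx) hσq_pos }

-- On `{q = 0}` the factor `q ^ 2 / p` of the left-hand side is the junk value `0 / 0 = 0`.
theorem efficiencyIntegrand_neymanAllocation_optimalDensity (μ : Measure 𝒳) (σ : ι → 𝒳 → ℝ)
    (q : 𝒳 → ℝ) (x : 𝒳) :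
    efficiencyIntegrand σ q (neymanAllocation σ) (optimalDensity μ σ q) x =
      (∑ a, σ a x) * q x * ∫ y, (∑ a, σ a y) * q y ∂μ := by
  simp only [efficiencyIntegrand, neymanAllocation, optimalDensity]
  rw [sum_sq_div_div_sum, ← mul_div_assoc, ← mul_pow, sq_div_self_div]

theorem integral_efficiencyIntegrand_neymanAllocation_optimalDensity (μ : Measure 𝒳)
    (σ : ι → 𝒳 → ℝ) (q : 𝒳 → ℝ) :
    ∫ x, efficiencyIntegrand σ q (neymanAllocation σ) (optimalDensity μ σ q) x ∂μ =
      (∫ x, (∑ a, σ a x) * q x ∂μ) ^ 2 := by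
  simp only [efficiencyIntegrand_neymanAllocation_optimalDensity, integral_mul_const, sq]

theorem K_treatment_joint_minimization_general (hσ : ∀ a x, 0 < σ a x)
    (hq_nonneg : ∀ x, 0 ≤ q x) (hσq : Integrable (fun x => (∑ a, σ a x) * q x) μ)
    (hσq_pos : 0 < ∫ x, (∑ a, σ a x) * q x ∂μ) :
    (∀ w p, IsDesign μ q w p →
      ENNReal.ofReal ((∫ x, (∑ a, σ a x) * q x ∂μ) ^ 2) ≤
        ∫⁻ x, ENNReal.ofReal (efficiencyIntegrand σ q w p x) ∂μ) ∧
    IsDesign μ q (neymanAllocation σ) (optimalDensity μ σ q) ∧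
    ∫ x, efficiencyIntegrand σ q (neymanAllocation σ) (optimalDensity μ σ q) x ∂μ =
      (∫ x, (∑ a, σ a x) * q x ∂μ) ^ 2 :=
  ⟨fun _ _ hwp => hwp.ofReal_sq_integral_le_lintegral_efficiencyIntegrand hq_nonneg hσq,
    isDesign_neymanAllocation_optimalDensity hσ hq_nonneg hσq hσq_pos,
    integral_efficiencyIntegrand_neymanAllocation_optimalDensity μ σ q⟩

end Design

/-- K-treatment joint minimization of the semiparametric efficiency bound: for every
measurable treatment-assignment rule `w` valued in the interior of the `K`-simplex and
every probability density `p` positive a.e. on `{q > 0}`,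
`∫ (∑ₐ σₐ²/wₐ) q²/p dμ ≥ (∫ (∑ₐ σₐ) q dμ)²`, and the bound is attained at
`wₐ*(x) = σₐ(x)/∑_b σ_b(x)` and `p*(x) = (∑ₐ σₐ(x)) q(x) / ∫ (∑ₐ σₐ) q dμ`. -/
theorem K_treatment_joint_minimization
    (K : ℕ) (hK : 2 ≤ K)
    {𝒳 : Type*} [MeasurableSpace 𝒳] (μ : Measure 𝒳)
    (σ : Fin K → 𝒳 → ℝ) (hσm : ∀ a, Measurable (σ a)) (hσp : ∀ a x, 0 < σ a x)
    (q : 𝒳 → ℝ) (hqm : Measurable q) (hq0 : ∀ x, 0 ≤ q x)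
    (hqint : Integrable q μ) (hq1 : ∫ x, q x ∂μ = 1)
    (hint : Integrable (fun x => (∑ a, σ a x) * q x) μ)
    (hpos : 0 < ∫ x, (∑ a, σ a x) * q x ∂μ) :
    (∀ w : 𝒳 → Fin K → ℝ, (∀ a, Measurable fun x => w x a) →
      (∀ x, (∀ a, 0 < w x a) ∧ (∑ a, w x a) = 1) →
      ∀ p : 𝒳 → ℝ, Measurable p → (∀ x, 0 ≤ p x) → Integrable p μ →
        (∫ x, p x ∂μ = 1) → (∀ᵐ x ∂μ, 0 < q x → 0 < p x) →
        ENNReal.ofReal ((∫ x, (∑ a, σ a x) * q x ∂μ) ^ 2) ≤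
          ∫⁻ x, ENNReal.ofReal ((∑ a, σ a x ^ 2 / w x a) * (q x ^ 2 / p x)) ∂μ) ∧
    (∫ x, (∑ a, σ a x) * q x / (∫ y, (∑ a, σ a y) * q y ∂μ) ∂μ = 1) ∧
    (∫ x, (∑ a, σ a x ^ 2 / (σ a x / ∑ b, σ b x)) *
        (q x ^ 2 / ((∑ a, σ a x) * q x / (∫ y, (∑ a, σ a y) * q y ∂μ))) ∂μ =
      (∫ x, (∑ a, σ a x) * q x ∂μ) ^ 2) := by
  obtain ⟨lower_bound, optimal_isDesign, optimal_value⟩ :=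
    K_treatment_joint_minimization_general hσp hq0 hint hpos
  exact ⟨fun w _ hw p _ hp0 hpi hp1 hqp =>
      lower_bound w p ⟨fun x => (hw x).1, fun x => (hw x).2, hp0, hpi, hp1, hqp⟩,
    optimal_isDesign.density_integral, optimal_value⟩
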